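/- Let q ≥ 2 and λ ≥ 1 be natural numbers and let β and e be integers. Let G be the group presented with generators s₁, …, s_{2q}, f and defining relators s₁² f, …, s_{2q−1}² f, s_{2q}^{2λ+1} f^β, and s₁ s₂ ⋯ s_{2q} f^e. Then G admits a presentation with 2q−2 generators and 2q−2 defining relators; that is, there exists a set R of at most 2q−2 elements of the free group on 2q−2 generators such that the presented group on these generators with relator set R is isomorphic to G. -/

import Mathlib

/-- The generator `s_{i+1}` (for `i < 2q`) of the Boileau--Zieschang group, as an
element of the free group on `2q+1` generators; the last generator plays the role
of `f`. -/
def BZgen (q : ℕ) (i : Fin (2 * q)) : FreeGroup (Fin (2 * q + 1)) :=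
  FreeGroup.of i.castSucc

/-- The generator `f` of the Boileau--Zieschang group. -/
def BZf (q : ℕ) : FreeGroup (Fin (2 * q + 1)) :=
  FreeGroup.of (Fin.last (2 * q))

/-- The relators `s₁² f, …, s_{2q−1}² f, s_{2q}^{2λ+1} f^β, s₁ s₂ ⋯ s_{2q} f^e`
of the Boileau--Zieschang group. -/
def BZrels (q : ℕ) (hq : 1 ≤ q) (lam : ℕ) (β e : ℤ) : Set (FreeGroup (Fin (2 * q + 1))) :=
  {w | (∃ i : Fin (2 * q - 1),
          w = BZgen q ⟨(i : ℕ), by have := i.isLt; omega⟩ ^ 2 * BZf q) ∨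
    w = BZgen q ⟨2 * q - 1, by omega⟩ ^ (2 * lam + 1) * BZf q ^ β ∨
    w = (List.ofFn (BZgen q)).prod * BZf q ^ e}

/-- Alternating product `a₀ a₁⁻¹ a₂ ⋯` (for `true`) or `a₀⁻¹ a₁ a₂⁻¹ ⋯` (for `false`). -/
def BZalt {H : Type*} [Group H] : Bool → List H → H
  | _, [] => 1
  | true, a :: L => a * BZalt false L
  | false, a :: L => a⁻¹ * BZalt true L

/-- The word expressing the eliminated generator. -/
def BZword {H : Type*} [Group H] (lam : ℕ) (b : H) (L : List H) : H :=
  ((b * BZalt false L) * (b⁻¹ * BZalt true L)) ^ lam * (b * BZalt false L)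

theorem BZalt_map {H K : Type*} [Group H] [Group K] (g : H →* K) (L : List H) :
    ∀ s, g (BZalt s L) = BZalt s (L.map g) := by
  induction L with
  | nil => intro s; cases s <;> simp [BZalt]
  | cons a L ih => intro s; cases s <;> simp [BZalt, ih]

theorem BZword_map {H K : Type*} [Group H] [Group K] (g : H →* K) (lam : ℕ) (b : H) (L : List H) :
    g (BZword lam b L) = BZword lam (g b) (L.map g) := by
  simp [BZword, BZalt_map]

theorem BZalt_swap {H : Type*} [Group H] (x : H) (L : List H)
    (hL : ∀ a ∈ L, (a * x) ^ 2 = x ^ 2) :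
    x * BZalt true L = BZalt false L * x ∧ x * BZalt false L = BZalt true L * x := by
  induction L with
  | nil => simp [BZalt]
  | cons a L ih =>
    obtain ⟨h1, h2⟩ := ih (fun c hc => hL c (by simp [hc]))
    have ha := hL a (by simp)
    have h3 : x * a = a⁻¹ * x := by
      have : a * (x * a) * x = x * x := by simpa [pow_two, mul_assoc] using ha
      rw [eq_inv_mul_iff_mul_eq]
      exact mul_right_cancel this
    have h4 : x * a⁻¹ = a * x := by
      rw [mul_inv_eq_iff_eq_mul, mul_assoc, h3]; simp
    constructor
    · simp only [BZalt]
      rw [← mul_assoc, h3, mul_assoc, h2, mul_assoc]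
    · simp only [BZalt]
      rw [← mul_assoc, h4, mul_assoc, h1, mul_assoc]

theorem BZalt_prod {H : Type*} [Group H] (x : H) (L : List H)
    (hL : ∀ a ∈ L, (a * x) ^ 2 = x ^ 2) :
    (L.map (fun a => a * x)).prod = BZalt true L * x ^ L.length := by
  induction L with
  | nil => simp [BZalt]
  | cons a L ih =>
    have hL' : ∀ c ∈ L, (c * x) ^ 2 = x ^ 2 := fun c hc => hL c (by simp [hc])
    obtain ⟨h1, h2⟩ := BZalt_swap x L hL'
    simp only [List.map_cons, List.prod_cons, List.length_cons, BZalt]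
    rw [ih hL', pow_succ', mul_assoc a x, ← mul_assoc x, h1]
    simp only [mul_assoc]

theorem BZ_core {H : Type*} [Group H] (x b t : H) (L : List H) (lam : ℕ) (β e d μ : ℤ)
    (hd : d = -β - (2 * μ * lam + μ + lam + 1))
    (hlen : (L.length : ℤ) = 2 * (μ + e) - 1)
    (hL : ∀ a ∈ L, (a * x) ^ 2 = x ^ 2)
    (hb : (b * x ^ (2 * d + 1)) ^ 2 = x ^ 2)
    (hp : b * x ^ (2 * d + 1) * (L.map (fun a => a * x)).prod * x * t * (x ^ 2)⁻¹ ^ e = 1) :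
    t ^ (2 * lam + 1) * (x ^ 2)⁻¹ ^ β = 1 ↔ BZword lam b L = x := by
  obtain ⟨h1, h2⟩ := BZalt_swap x L hL
  rw [BZalt_prod x L hL] at hp
  set P := BZalt true L
  set M := BZalt false L
  obtain ⟨z, hz⟩ : ∃ z, z = x ^ 2 := ⟨_, rfl⟩
  have zx : Commute z x := hz ▸ (Commute.refl x).pow_left 2
  have zP : Commute z P := by
    rw [hz, Commute, SemiconjBy, pow_two, mul_assoc, h1, ← mul_assoc, h2, mul_assoc]
  have zM : Commute z M := by
    rw [hz, Commute, SemiconjBy, pow_two, mul_assoc, h2, ← mul_assoc, h1, mul_assoc]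
  have zb : Commute z b := by
    have h : Commute z (b * x ^ (2 * d + 1)) := by
      rw [hz, ← hb]; exact (Commute.refl _).pow_left 2
    have h' : Commute z (b * x ^ (2 * d + 1) * (x ^ (2 * d + 1))⁻¹) :=
      h.mul_right (zx.zpow_right _).inv_right
    simpa using h'
  have xodd : ∀ k : ℤ, x ^ (2 * k + 1) = x * z ^ k := by
    intro k
    rw [← (zx.zpow_left k).eq, hz, zpow_add, zpow_mul, zpow_one]
    norm_cast
  have hxb : x * b = b⁻¹ * x * z ^ (-2 * d) := by
    rw [xodd] at hb
    have c1 : Commute (z ^ d) b := zb.zpow_left d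
    have c2 : Commute (z ^ d) x := zx.zpow_left d
    have e1 : (b * (x * z ^ d)) ^ 2 = b * (x * b) * x * (z ^ d * z ^ d) := by
      rw [pow_two]
      calc b * (x * z ^ d) * (b * (x * z ^ d)) = b * x * (z ^ d * b) * x * z ^ d := by
            simp only [mul_assoc]
        _ = b * x * b * (z ^ d * x) * z ^ d := by rw [c1.eq]; simp only [mul_assoc]
        _ = _ := by rw [c2.eq]; simp only [mul_assoc]
    rw [e1] at hb
    have e2 : b * (x * b) * x = x * x * z ^ (-2 * d) := by
      rw [← pow_two, ← hb, mul_assoc (_ * x), ← zpow_add, ← zpow_add]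
      ring_nf; simp
    have e3 : b * (x * b) * x = (x * z ^ (-2 * d)) * x := by
      rw [e2, mul_assoc, mul_assoc, (zx.zpow_left _).eq]
    have e4 := mul_right_cancel e3
    rw [mul_assoc, ← e4]; simp
  set w := b * M with hw
  set v := b⁻¹ * P with hv
  have zw : Commute z w := zb.mul_right zM
  have zv : Commute z v := zb.inv_right.mul_right zP
  have hxw : x * w = v * x * z ^ (-2 * d) := by
    rw [hw, ← mul_assoc, hxb, mul_assoc _ _ M, (zM.zpow_left _).eq, ← mul_assoc, mul_assoc b⁻¹, h2,
      hv]
    simp only [mul_assoc]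
  have ht : t⁻¹ = w * x * z ^ (d + μ) := by
    have q1 : x ^ (2 * d + 1) * (P * x ^ L.length) * x = M * (x * z ^ (d + μ + e)) := by
      rw [← xodd]
      have : x ^ (2 * d + 1) * P = M * x ^ (2 * d + 1) := by
        rw [xodd, mul_assoc, (zP.zpow_left _).eq, ← mul_assoc, h1, mul_assoc]
      rw [← mul_assoc, this, mul_assoc, mul_assoc, ← zpow_natCast, hlen, ← zpow_add_one, ← zpow_add]
      congr 2; ring
    rw [mul_assoc b, mul_assoc b, q1, ← hz] at hp
    have q2 : w * (x * z ^ (d + μ + e)) * (t * z⁻¹ ^ e) = 1 := by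
      rw [← hp]; simp only [hw, mul_assoc]
    have q3 := inv_eq_of_mul_eq_one_left q2
    rw [mul_inv_rev, inv_zpow, inv_inv] at q3
    have q4 : t⁻¹ = z ^ (-e) * (w * (x * z ^ (d + μ + e))) := by
      rw [← q3, zpow_neg]; simp
    rw [q4, (((zw.mul_right (zx.mul_right ((Commute.refl z).zpow_right _)))).zpow_left (-e)).eq]
    rw [mul_assoc w, mul_assoc w, mul_assoc x, ← zpow_add]
    congr 3; ring
  have ht2 : (t⁻¹) ^ 2 = w * v * z ^ (1 + 2 * μ) := by
    rw [ht, pow_two]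
    have zwx := (zw.mul_right zx).zpow_left (d + μ)
    calc w * x * z ^ (d + μ) * (w * x * z ^ (d + μ))
        = w * x * (z ^ (d + μ) * (w * x)) * z ^ (d + μ) := by simp only [mul_assoc]
      _ = w * (x * w) * x * (z ^ (d + μ) * z ^ (d + μ)) := by rw [zwx.eq]; simp only [mul_assoc]
      _ = w * v * x * (z ^ (-2 * d) * x) * (z ^ (d + μ) * z ^ (d + μ)) := by
          rw [hxw]; simp only [mul_assoc]
      _ = w * v * (x ^ 2 * (z ^ (-2 * d) * (z ^ (d + μ) * z ^ (d + μ)))) := by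
          rw [(zx.zpow_left _).eq, pow_two]; simp only [mul_assoc]
      _ = _ := by
          rw [← hz, ← zpow_add, ← zpow_add, ← zpow_one_add]
          congr 2; ring
  have ht3 : (t⁻¹) ^ (2 * lam + 1) = (w * v) ^ lam * w * x * z ^ (-β - 1) := by
    rw [pow_succ, pow_mul, ht2, ((zw.mul_right zv).zpow_left _).symm.mul_pow, ht]
    rw [mul_assoc, ← zpow_natCast (z ^ _), ← zpow_mul, ← mul_assoc (z ^ _),
      ((zw.mul_right zx).zpow_left _).eq, mul_assoc (w * x), ← zpow_add]
    have : (1 + 2 * μ) * (lam : ℤ) + (d + μ) = -β - 1 := by rw [hd]; ring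
    rw [this]; simp only [mul_assoc]
  have hW : BZword lam b L = (w * v) ^ lam * w := rfl
  rw [hW, ← hz]
  generalize (w * v) ^ lam * w = V at *
  rw [inv_pow] at ht3
  rw [mul_eq_one_iff_inv_eq, ht3, inv_zpow', sub_eq_add_neg, zpow_add, (zpow_mul_comm z (-β) (-1)),
    ← mul_assoc, mul_eq_right, zpow_neg, zpow_one, mul_inv_eq_one, hz, pow_two]
  exact mul_left_inj x

theorem BZ_ofFn {H : Type*} {N : ℕ} (S : ℕ → H) :
    List.ofFn (fun i : Fin N => S i) = (List.range N).map S := by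
  apply List.ext_getElem <;> simp

theorem BZ_range {H : Type*} [Group H] (S : ℕ → H) (n : ℕ) :
    ((List.range (n + 3)).map S).prod
      = S 0 * ((List.range n).map (fun i => S (i + 1))).prod * S (n + 1) * S (n + 2) := by
  rw [List.range_succ, List.range_succ, List.range_succ_eq_map]
  simp [Function.comp_def, mul_assoc]

/-- Proposition 1.5 of Boileau--Zieschang: the group
`⟨s₁, …, s_{2q}, f ∣ s₁² f, …, s_{2q−1}² f, s_{2q}^{2λ+1} f^β, s₁ ⋯ s_{2q} f^e⟩`
with `q ≥ 2`, `λ ≥ 1`, admits a presentation with `2q−2` generators and at most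
`2q−2` defining relators. -/
theorem BZ_presentation (q : ℕ) (hq : 2 ≤ q) (lam : ℕ) (hlam : 1 ≤ lam) (β e : ℤ) :
    ∃ R : Finset (FreeGroup (Fin (2 * q - 2))), R.card ≤ 2 * q - 2 ∧
      Nonempty (PresentedGroup (R : Set (FreeGroup (Fin (2 * q - 2)))) ≃*
        PresentedGroup (BZrels q (by omega) lam β e)) := by
  classical
  obtain ⟨n, hn⟩ : ∃ n, 2 * q = n + 3 := ⟨2 * q - 3, by omega⟩
  obtain ⟨μ, hμ⟩ : ∃ μ : ℤ, μ = q - 1 - e := ⟨_, rfl⟩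
  obtain ⟨d, hd⟩ : ∃ d : ℤ, d = -β - (2 * μ * lam + μ + lam + 1) := ⟨_, rfl⟩
  have hlen : (n : ℤ) = 2 * (μ + e) - 1 := by rw [hμ]; push_cast [← hn]; omega
  -- exponents
  obtain ⟨r, hr⟩ : ∃ r : ℕ → ℤ, r = fun i => if i = 0 then 2 * d + 1 else 1 := ⟨_, rfl⟩
  have r0 : r 0 = 2 * d + 1 := by simp [hr]
  have r1 : ∀ i, r (i + 1) = 1 := by simp [hr]
  -- free generators, indexed by naturals
  obtain ⟨a, ha⟩ : ∃ a : ℕ → FreeGroup (Fin (2 * q - 2)),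
      a = fun i => if h : i < 2 * q - 2 then FreeGroup.of ⟨i, h⟩ else 1 := ⟨_, rfl⟩
  have ha' : ∀ i : Fin (2 * q - 2), a i = FreeGroup.of i := by intro i; simp [ha]
  obtain ⟨X, hX⟩ : ∃ X, X = BZword lam (a 0) ((List.range n).map (fun i => a (i + 1))) := ⟨_, rfl⟩
  let rel : Fin (2 * q - 2) → FreeGroup (Fin (2 * q - 2)) := fun i =>
    (a i * X ^ r i) ^ 2 * (X ^ 2)⁻¹
  refine ⟨Finset.univ.image rel, ?_, ?_⟩
  · exact Finset.card_image_le.trans (by simp)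
  set R : Set (FreeGroup (Fin (2 * q - 2))) := ((Finset.univ.image rel : Finset (FreeGroup (Fin (2 * q - 2)))) :
    Set (FreeGroup (Fin (2 * q - 2)))) with hR
  -- the target group
  set Q := BZrels q (by omega) lam β e with hQ
  let s : ℕ → PresentedGroup Q := fun i =>
    if h : i < 2 * q + 1 then PresentedGroup.of ⟨i, h⟩ else 1
  have hs : ∀ i : Fin (2 * q + 1), s i = PresentedGroup.of i := by
    intro i; simp only [s, dif_pos i.isLt]
  have sgen : ∀ i : Fin (2 * q), PresentedGroup.mk Q (BZgen q i) = s i := by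
    intro i
    have := hs i.castSucc
    simp only [Fin.val_castSucc] at this
    rw [this]; rfl
  have sf : PresentedGroup.mk Q (BZf q) = s (2 * q) := by
    have := hs (Fin.last _)
    simp only [Fin.val_last] at this
    rw [this]; rfl
  have hrel : ∀ w ∈ Q, PresentedGroup.mk Q w = 1 := fun w hw =>
    PresentedGroup.one_of_mem hw
  have sq1 : ∀ i, i ≤ n + 1 → s i ^ 2 * s (2 * q) = 1 := by
    intro i hi
    have := hrel _ (Or.inl ⟨⟨i, by omega⟩, rfl⟩)
    rwa [map_mul, map_pow, sgen, sf] at this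
  have sq2 : s (n + 2) ^ (2 * lam + 1) * s (2 * q) ^ β = 1 := by
    have := hrel _ (Or.inr (Or.inl rfl))
    rw [map_mul, map_pow, map_zpow, sgen, sf] at this
    rwa [show n + 2 = 2 * q - 1 by omega]
  have sq3 : ((List.range (n + 3)).map s).prod * s (2 * q) ^ e = 1 := by
    have := hrel _ (Or.inr (Or.inr rfl))
    rw [map_mul, map_zpow, sf, map_list_prod, List.map_ofFn] at this
    have h2 : (PresentedGroup.mk Q ∘ BZgen q) = fun i : Fin (2 * q) => s i := by
      funext i; exact sgen i
    rw [h2, BZ_ofFn] at this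
    rwa [← hn]
  have hsf : s (2 * q) = (s (n + 1) ^ 2)⁻¹ := eq_inv_of_mul_eq_one_right (sq1 (n + 1) le_rfl)
  rw [hsf] at sq1 sq2 sq3
  -- the map from the new presentation to the old one
  let c : ℕ → PresentedGroup Q := fun i => s i * s (n + 1) ^ (-r i)
  have hsc : ∀ i, s i = c i * s (n + 1) ^ r i := by intro i; simp [c]
  let F := FreeGroup.lift (fun i : Fin (2 * q - 2) => c i)
  have hF : ∀ i, i ≤ n → F (a i) = c i := by
    intro i hi
    have := ha' ⟨i, by omega⟩
    simp only at this
    rw [this]; simp [F]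
  have hFX : F X = s (n + 1) := by
    rw [hX, BZword_map, hF 0 (by omega), List.map_map]
    have hmap : (List.range n).map (F ∘ fun i => a (i + 1))
        = (List.range n).map (fun i => c (i + 1)) := by
      apply List.map_congr_left
      intro i hi
      rw [List.mem_range] at hi
      exact hF (i + 1) (by omega)
    rw [hmap]
    refine (BZ_core (s (n + 1)) (c 0) (s (n + 2)) _ lam β e d μ hd (by simpa using hlen) ?_ ?_ ?_).mp
      sq2
    · intro y hy
      obtain ⟨i, hi, rfl⟩ := List.mem_map.mp hy
      rw [List.mem_range] at hi
      have h := hsc (i + 1)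
      rw [r1, zpow_one] at h
      rw [← h]
      exact mul_inv_eq_one.mp (sq1 (i + 1) (by omega))
    · rw [← r0, ← hsc]
      exact mul_inv_eq_one.mp (sq1 0 (by omega))
    · rw [← r0, ← hsc, List.map_map, ← sq3, BZ_range]
      congr 5
      apply List.map_congr_left
      intro i hi
      have h := hsc (i + 1)
      rw [r1, zpow_one] at h
      exact h.symm
  have hFR : ∀ w ∈ R, F w = 1 := by
    intro w hw
    simp only [hR, Finset.coe_image, Finset.coe_univ, Set.image_univ, Set.mem_range] at hw
    obtain ⟨i, rfl⟩ := hw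
    have hi : (i : ℕ) ≤ n := by omega
    simp only [rel, map_mul, map_pow, map_zpow, map_inv, hFX, hF i hi]
    rw [← hsc]
    exact sq1 i (by omega)
  let Φ : PresentedGroup R →* PresentedGroup Q := PresentedGroup.toGroup hFR
  have hΦ : ∀ w, Φ (PresentedGroup.mk R w) = F w := fun w => rfl
  -- the inverse map
  let x : PresentedGroup R := PresentedGroup.mk R X
  let A : ℕ → PresentedGroup R := fun i => PresentedGroup.mk R (a i)
  let t : PresentedGroup R :=
    (A 0 * x ^ (2 * d + 1) * ((List.range n).map (fun i => A (i + 1) * x)).prod * x)⁻¹ * (x ^ 2) ^ e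
  let S : ℕ → PresentedGroup R := fun i =>
    if i ≤ n then A i * x ^ r i else if i = n + 1 then x else if i = n + 2 then t else (x ^ 2)⁻¹
  have S1 : ∀ i, i ≤ n → S i = A i * x ^ r i := by intro i hi; simp [S, hi]
  have S2 : S (n + 1) = x := by simp [S]
  have S3 : S (n + 2) = t := by simp [S]
  have S4 : S (2 * q) = (x ^ 2)⁻¹ := by
    have h1 : ¬ 2 * q ≤ n := by omega
    have h2 : ¬ 2 * q = n + 1 := by omega
    have h3 : ¬ 2 * q = n + 2 := by omega
    simp only [S, if_neg h1, if_neg h2, if_neg h3]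
  have Ssq : ∀ i, i ≤ n → S i ^ 2 = x ^ 2 := by
    intro i hi
    have h := PresentedGroup.one_of_mem (rels := R) (x := rel ⟨i, by omega⟩) (by simp [hR])
    simp only [rel, map_mul, map_pow, map_zpow, map_inv] at h
    rw [S1 i hi]
    exact mul_inv_eq_one.mp h
  have hxw : BZword lam (A 0) ((List.range n).map (fun i => A (i + 1))) = x := by
    simp only [x, hX, BZword_map, List.map_map]; rfl
  have hprod : A 0 * x ^ (2 * d + 1) * ((List.range n).map (fun i => A (i + 1) * x)).prod * x * t
      * (x ^ 2)⁻¹ ^ e = 1 := by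
    simp only [t, inv_zpow]; group
  have ht : t ^ (2 * lam + 1) * (x ^ 2)⁻¹ ^ β = 1 := by
    refine (BZ_core x (A 0) t _ lam β e d μ hd (by simpa using hlen) ?_ ?_ ?_).mpr hxw
    · intro y hy
      obtain ⟨i, hi, rfl⟩ := List.mem_map.mp hy
      rw [List.mem_range] at hi
      have h := S1 (i + 1) (by omega)
      rw [r1, zpow_one] at h
      rw [← h]
      exact Ssq _ (by omega)
    · rw [← r0, ← S1 0 (by omega)]
      exact Ssq _ (by omega)
    · rw [List.map_map]; exact hprod
  let K := FreeGroup.lift (fun i : Fin (2 * q + 1) => S i)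
  have Kgen : ∀ i : Fin (2 * q), K (BZgen q i) = S i := by intro i; simp [K, BZgen]
  have Kf : K (BZf q) = (x ^ 2)⁻¹ := by simp [K, BZf, S4]
  have hK : ∀ w ∈ Q, K w = 1 := by
    rintro w (⟨i, rfl⟩ | rfl | rfl)
    · rw [map_mul, map_pow, Kgen, Kf]
      simp only
      rcases Nat.lt_or_ge n i with hi | hi
      · have : (i : ℕ) = n + 1 := by omega
        rw [this, S2]; simp
      · rw [Ssq _ hi]; simp
    · rw [map_mul, map_pow, map_zpow, Kgen, Kf]
      simp only
      rw [show 2 * q - 1 = n + 2 by omega, S3, ht]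
    · rw [map_mul, map_zpow, Kf, map_list_prod, List.map_ofFn]
      have h2 : (K ∘ BZgen q) = fun i : Fin (2 * q) => S i := by
        funext i; exact Kgen i
      have h3 : List.range (2 * q) = List.range (n + 3) := congrArg _ hn
      rw [h2, BZ_ofFn, h3, BZ_range, S2, S3, S1 0 (by omega), r0, ← hprod]
      congr 5
      apply List.map_congr_left
      intro i hi
      rw [List.mem_range] at hi
      rw [S1 _ (by omega), r1, zpow_one]
  let Ψ : PresentedGroup Q →* PresentedGroup R := PresentedGroup.toGroup hK
  have hΨ : ∀ i, i < 2 * q + 1 → Ψ (s i) = S i := by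
    intro i hi
    have := hs ⟨i, hi⟩
    simp only at this
    rw [this]
    exact PresentedGroup.toGroup.of hK
  have hΦx : Φ x = s (n + 1) := hFX
  have hΦA : ∀ i, i ≤ n → Φ (A i) = c i := hF
  have hΦS : ∀ i, i ≤ n → Φ (S i) = s i := by
    intro i hi
    rw [S1 i hi, map_mul, map_zpow, hΦx, hΦA i hi, ← hsc]
  refine ⟨MonoidHom.toMulEquiv Φ Ψ ?_ ?_⟩
  · apply PresentedGroup.ext
    intro i
    have h : (PresentedGroup.of i : PresentedGroup R) = A i := by
      simp only [A, ha']; rfl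
    have hi : (i : ℕ) ≤ n := by omega
    simp only [MonoidHom.comp_apply, MonoidHom.id_apply]
    rw [h, hΦA i hi]
    simp only [c]
    rw [map_mul, map_zpow, hΨ _ (by omega), hΨ _ (by omega), S2, S1 _ hi]
    simp
  · apply PresentedGroup.ext
    intro i
    simp only [MonoidHom.comp_apply, MonoidHom.id_apply]
    rw [← hs i, hΨ _ i.isLt]
    rcases Nat.lt_or_ge n i with hi | hi
    · have : (i : ℕ) = n + 1 ∨ (i : ℕ) = n + 2 ∨ (i : ℕ) = 2 * q := by omega
      rcases this with h | h | h
      · rw [h, S2, hΦx]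
      · rw [h, S3]
        have h1 := congrArg Φ hprod
        rw [← r0, ← S1 0 (by omega), map_mul, map_mul, map_mul, map_mul, hΦS 0 (by omega), hΦx,
          map_zpow, map_inv, map_pow, hΦx, map_list_prod, List.map_map, map_one] at h1
        have hmap : (List.range n).map (Φ ∘ fun i => A (i + 1) * x)
            = (List.range n).map (fun i => s (i + 1)) := by
          apply List.map_congr_left
          intro j hj
          rw [List.mem_range] at hj
          have := hΦS (j + 1) (by omega)
          rwa [S1 _ (by omega), r1, zpow_one] at this
        rw [hmap] at h1
        rw [BZ_range, ← h1] at sq3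
        exact (mul_left_cancel (mul_right_cancel sq3)).symm
      · rw [h, S4, map_inv, map_pow, hΦx, hsf]
    · exact hΦS _ hi
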